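/- For any canonical state w ∈ W and any formula B^T_X φ ∉ F(w), there exists a canonical state u ∈ W such that w ∼_X u, T = 𝒯_u, and φ ∉ F(u). -/

import Mathlib

/- Language: formulas over atomic propositions P, data variables V, actors 𝒜 = A.
   `bel T X φ` is B^T_X φ ; `str C T X φ` is [C]^T_X φ. -/
inductive Formula (P V A : Type) : Type
  | atom : P → Formula P V A
  | neg : Formula P V A → Formula P V A
  | imp : Formula P V A → Formula P V A → Formula P V A
  | bel : Set V → Set V → Formula P V A → Formula P V A
  | str : Set A → Set V → Set V → Formula P V A → Formula P V A

variable {P V A : Type}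

/-- Propositional tautologies: true under every valuation respecting ¬ and →. -/
def Tautology (φ : Formula P V A) : Prop :=
  ∀ v : Formula P V A → Prop,
    (∀ ψ, v (Formula.neg ψ) ↔ ¬ v ψ) →
    (∀ ψ χ, v (Formula.imp ψ χ) ↔ (v ψ → v χ)) →
    v φ

/-- Theorems of the logical system of doxastic strategies. -/
inductive Thm : Formula P V A → Prop
  | taut {φ : Formula P V A} : Tautology φ → Thm φ
  | truth {X : Set V} {φ : Formula P V A} :
      Thm (Formula.imp (Formula.bel ∅ X φ) φ)
  | negIntro {T X : Set V} {φ : Formula P V A} :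
      Thm (Formula.imp (Formula.neg (Formula.bel T X φ))
        (Formula.bel ∅ X (Formula.neg (Formula.bel T X φ))))
  | distrib {T X : Set V} {φ ψ : Formula P V A} :
      Thm (Formula.imp (Formula.bel T X (Formula.imp φ ψ))
        (Formula.imp (Formula.bel T X φ) (Formula.bel T X ψ)))
  | trust {T X Y : Set V} {φ : Formula P V A} :
      Thm (Formula.bel T X (Formula.imp (Formula.bel T Y φ) φ))
  | monoB {T T' X X' : Set V} {φ : Formula P V A} :
      T ⊆ T' → X ⊆ X' →
      Thm (Formula.imp (Formula.bel T X φ) (Formula.bel T' X' φ))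
  | monoS {C C' : Set A} {T T' X X' : Set V} {φ : Formula P V A} :
      T ⊆ T' → X ⊆ X' → C ⊆ C' →
      Thm (Formula.imp (Formula.str C T X φ) (Formula.str C' T' X' φ))
  | coop {C D : Set A} {T X : Set V} {φ ψ : Formula P V A} :
      C ∩ D = ∅ →
      Thm (Formula.imp (Formula.str C T X (Formula.imp φ ψ))
        (Formula.imp (Formula.str D T X φ) (Formula.str (C ∪ D) T X ψ)))
  | strIntro₁ {C : Set A} {T X : Set V} {φ : Formula P V A} :
      Thm (Formula.imp (Formula.str C T X φ) (Formula.bel T X (Formula.str C T X φ)))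
  | strIntro₂ {C : Set A} {T X : Set V} {φ : Formula P V A} :
      Thm (Formula.imp (Formula.bel T X (Formula.str C T X φ)) (Formula.str C T X φ))
  | unavoid {T X Y : Set V} {φ : Formula P V A} :
      Thm (Formula.imp (Formula.bel T X (Formula.str ∅ T Y φ)) (Formula.str ∅ T X φ))
  | pub {T : Set V} {φ : Formula P V A} :
      Thm (Formula.imp (Formula.bel T ∅ φ) (Formula.str ∅ T ∅ φ))
  | mp {φ ψ : Formula P V A} : Thm (Formula.imp φ ψ) → Thm φ → Thm ψ
  | nec {φ : Formula P V A} : Thm φ → Thm (Formula.bel ∅ ∅ φ)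

/-- `Deduces F φ`: φ is derivable from F together with the theorems using only Modus Ponens. -/
inductive Deduces (F : Set (Formula P V A)) : Formula P V A → Prop
  | thm {φ : Formula P V A} : Thm φ → Deduces F φ
  | mem {φ : Formula P V A} : φ ∈ F → Deduces F φ
  | mp {φ ψ : Formula P V A} :
      Deduces F (Formula.imp φ ψ) → Deduces F φ → Deduces F ψ

def Consistent (F : Set (Formula P V A)) : Prop :=
  ¬ ∃ φ : Formula P V A, Deduces F φ ∧ Deduces F (Formula.neg φ)

def MaximalConsistent (F : Set (Formula P V A)) : Prop :=
  Consistent F ∧ ∀ G : Set (Formula P V A), Consistent G → F ⊆ G → F = G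

/-- A game. -/
structure Game (P V A : Type) : Type 1 where
  W : Type
  sim : V → W → W → Prop
  sim_equiv : ∀ x : V, Equivalence (sim x)
  trust : W → Set V
  Δ : Type
  delta_nonempty : Nonempty Δ
  M : W → (A → Δ) → W → Prop
  pi : P → Set W

/-- `w ∼_X u`. -/
def Game.simSet (G : Game P V A) (X : Set V) (w u : G.W) : Prop :=
  ∀ x ∈ X, G.sim x w u

/-- The satisfaction relation `w ⊨ φ` (as `Sat G φ w`). -/
def Sat (G : Game P V A) : Formula P V A → G.W → Prop
  | Formula.atom p, w => w ∈ G.pi p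
  | Formula.neg φ, w => ¬ Sat G φ w
  | Formula.imp φ ψ, w => Sat G φ w → Sat G ψ w
  | Formula.bel T X φ, w =>
      ∀ u : G.W, G.simSet X w u → T ⊆ G.trust u → Sat G φ u
  | Formula.str C T X φ, w =>
      ∃ s : {a : A // a ∈ C} → G.Δ,
        ∀ (u v : G.W) (δ : A → G.Δ),
          G.simSet X w u → T ⊆ G.trust u →
          (∀ (a : A) (h : a ∈ C), s ⟨a, h⟩ = δ a) →
          G.M u δ v → T ⊆ G.trust v → Sat G φ v

/- ===================== Canonical game ===================== -/

/-- One block `X_i, b_i, T_i, F_i` of a canonical state. -/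
structure Block (P V A B : Type) where
  X : Set V
  b : B
  T : Set V
  F : Set (Formula P V A)

variable {B : Type}

/-- `F(w)`: the last set of formulae of the sequence (or `F0` for the root). -/
def cF (F0 : Set (Formula P V A)) (l : List (Block P V A B)) : Set (Formula P V A) :=
  l.getLast?.elim F0 Block.F

/-- `𝒯_w = T(w)`: the last dataset of the sequence (or `T0` for the root). -/
def cTrust (T0 : Set V) (l : List (Block P V A B)) : Set V :=
  l.getLast?.elim T0 Block.T

/-- Membership of a sequence in the set of canonical states `W`. -/
inductive IsState (T0 : Set V) (F0 : Set (Formula P V A)) :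
    List (Block P V A B) → Prop
  | nil :
      (∀ (Y : Set V) (ψ : Formula P V A),
        Formula.imp (Formula.bel T0 Y ψ) ψ ∈ F0) →
      IsState T0 F0 []
  | snoc {l : List (Block P V A B)} {bl : Block P V A B} :
      IsState T0 F0 l →
      MaximalConsistent bl.F →
      (∀ φ : Formula P V A, Formula.bel ∅ bl.X φ ∈ cF F0 l → φ ∈ bl.F) →
      (∀ (Y : Set V) (ψ : Formula P V A),
        Formula.imp (Formula.bel bl.T Y ψ) ψ ∈ bl.F) →
      IsState T0 F0 (l ++ [bl])

/-- The canonical states. -/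
def CState (T0 : Set V) (F0 : Set (Formula P V A)) (B : Type) : Type :=
  {l : List (Block P V A B) // IsState T0 F0 l}

attribute [local instance] Classical.propDecidable

/-- Length of the longest common prefix of two sequences. -/
noncomputable def cpl {α : Type} : List α → List α → Nat
  | a :: as, b :: bs => if a = b then cpl as bs + 1 else 0
  | _, _ => 0

/-- The blocks labelling the edges on the unique simple path between two
nodes of the canonical tree. -/
noncomputable def pathBlocks (w u : List (Block P V A B)) : List (Block P V A B) :=
  w.drop (cpl w u) ++ u.drop (cpl w u)

/-- `w ∼_x u` in the canonical game: every edge along the unique simple path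
between `w` and `u` is labelled with `x`. -/
def csimVar (x : V) (w u : List (Block P V A B)) : Prop :=
  ∀ bl ∈ pathBlocks w u, x ∈ bl.X

/-- `w ∼_X u` in the canonical game. -/
def csim (X : Set V) (w u : List (Block P V A B)) : Prop :=
  ∀ x ∈ X, csimVar x w u

/-- The canonical mechanism `M`. -/
def Mech (T0 : Set V) (F0 : Set (Formula P V A))
    (w : CState T0 F0 B) (δ : A → Formula P V A × CState T0 F0 B)
    (v : CState T0 F0 B) : Prop :=
  ∀ (C : Set A) (T X : Set V) (φ : Formula P V A),
    Formula.str C T X φ ∈ cF F0 w.1 →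
    (∀ a ∈ C, (δ a).1 = φ) →
    (∀ a ∈ C, csim X w.1 (δ a).2.1) →
    T ⊆ cTrust T0 w.1 → T ⊆ cTrust T0 v.1 →
    φ ∈ cF F0 v.1

/-- Satisfaction `w ⊨ φ` on the canonical game (as `CSat T0 F0 φ w`). -/
def CSat (T0 : Set V) (F0 : Set (Formula P V A)) :
    Formula P V A → CState T0 F0 B → Prop
  | Formula.atom p, w => Formula.atom p ∈ cF F0 w.1
  | Formula.neg φ, w => ¬ CSat T0 F0 φ w
  | Formula.imp φ ψ, w => CSat T0 F0 φ w → CSat T0 F0 ψ w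
  | Formula.bel T X φ, w =>
      ∀ u : CState T0 F0 B, csim X w.1 u.1 → T ⊆ cTrust T0 u.1 → CSat T0 F0 φ u
  | Formula.str C T X φ, w =>
      ∃ s : {a : A // a ∈ C} → Formula P V A × CState T0 F0 B,
        ∀ (u v : CState T0 F0 B) (δ : A → Formula P V A × CState T0 F0 B),
          csim X w.1 u.1 → T ⊆ cTrust T0 u.1 →
          (∀ (a : A) (h : a ∈ C), s ⟨a, h⟩ = δ a) →
          Mech T0 F0 u δ v → T ⊆ cTrust T0 v.1 → CSat T0 F0 φ v

/- ===================== Harmony ===================== -/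

/-- Conjunction definable from ¬ and →. -/
def fand (φ ψ : Formula P V A) : Formula P V A :=
  Formula.neg (Formula.imp φ (Formula.neg ψ))

/-- A canonical tautology (verum). -/
noncomputable def verum (P V A : Type) [Nonempty (Formula P V A)] : Formula P V A :=
  Formula.imp (Classical.arbitrary (Formula P V A)) (Classical.arbitrary (Formula P V A))

/-- Conjunction of a finite list of formulae. -/
noncomputable def conjList [Nonempty (Formula P V A)] :
    List (Formula P V A) → Formula P V A
  | [] => verum P V A
  | φ :: l => fand φ (conjList l)

/-- The pair `(F, G)` is in `T`-harmony: `F ⊬ [∅]^T_V ¬⋀G'` for each finite `G' ⊆ G`. -/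
def THarmony [Nonempty (Formula P V A)] (T : Set V)
    (F G : Set (Formula P V A)) : Prop :=
  ∀ l : List (Formula P V A), (∀ ψ ∈ l, ψ ∈ G) →
    ¬ Deduces F (Formula.str ∅ T (Set.univ : Set V) (Formula.neg (conjList l)))

theorem Deduces.sub_closed {F G : Set (Formula P V A)}
    (hG : ∀ ψ ∈ F, Deduces G ψ) {χ : Formula P V A} (h : Deduces F χ) : Deduces G χ := by
  induction h with
  | thm h => exact .thm h
  | mem h => exact hG _ h
  | mp _ _ h1 h2 => exact .mp h1 h2

theorem MaximalConsistent.closed {F : Set (Formula P V A)} (hF : MaximalConsistent F)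
    {χ : Formula P V A} (h : Deduces F χ) : χ ∈ F := by
  have hc : Consistent (insert χ F) := by
    rintro ⟨ψ, h1, h2⟩
    have key : ∀ θ ∈ insert χ F, Deduces F θ := by
      rintro θ (rfl | hθ)
      · exact h
      · exact .mem hθ
    exact hF.1 ⟨ψ, h1.sub_closed key, h2.sub_closed key⟩
  rw [hF.2 _ hc (Set.subset_insert _ _)]
  exact Set.mem_insert _ _

theorem Deduces.deduction {F : Set (Formula P V A)} {α χ : Formula P V A}
    (h : Deduces (insert α F) χ) : Deduces F (Formula.imp α χ) := by
  have k : ∀ χ : Formula P V A, Deduces F χ → Deduces F (Formula.imp α χ) := fun χ hχ =>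
    .mp (.thm (.taut (fun v _ hi => by simp only [hi]; tauto))) hχ
  induction h with
  | thm h => exact k _ (.thm h)
  | mem h =>
    rcases h with rfl | h
    · exact .thm (.taut (fun v _ hi => by simp only [hi]; tauto))
    · exact k _ (.mem h)
  | @mp φ ψ _ _ h1 h2 =>
    have t : Thm (Formula.imp (Formula.imp α (Formula.imp φ ψ))
      (Formula.imp (Formula.imp α φ) (Formula.imp α ψ))) :=
      .taut (fun v _ hi => by simp only [hi]; tauto)
    exact .mp (.mp (.thm t) h1) h2

theorem Deduces.of_sUnion {c : Set (Set (Formula P V A))} (hc : IsChain (· ⊆ ·) c)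
    (hne : c.Nonempty) {χ : Formula P V A} (h : Deduces (⋃₀ c) χ) : ∃ s ∈ c, Deduces s χ := by
  induction h with
  | thm h => exact ⟨hne.some, hne.some_mem, .thm h⟩
  | mem h =>
    obtain ⟨s, hs, h⟩ := h
    exact ⟨s, hs, .mem h⟩
  | mp _ _ h1 h2 =>
    obtain ⟨s, hs, h1⟩ := h1
    obtain ⟨t, ht, h2⟩ := h2
    rcases hc.total hs ht with hst | hst
    · exact ⟨t, ht, .mp (h1.sub_closed fun _ h => .mem (hst h)) h2⟩
    · exact ⟨s, hs, .mp h1 (h2.sub_closed fun _ h => .mem (hst h))⟩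

theorem exists_maximalConsistent {F : Set (Formula P V A)} (hF : Consistent F) :
    ∃ M, F ⊆ M ∧ MaximalConsistent M := by
  obtain ⟨M, hFM, hM⟩ := zorn_subset_nonempty {G : Set (Formula P V A) | Consistent G} (by
    intro c hcs hc hne
    refine ⟨⋃₀ c, ?_, fun s hs => Set.subset_sUnion_of_mem hs⟩
    rintro ⟨φ, h1, h2⟩
    obtain ⟨s, hs, h1⟩ := h1.of_sUnion hc hne
    obtain ⟨t, ht, h2⟩ := h2.of_sUnion hc hne
    rcases hc.total hs ht with hst | hst
    · exact hcs ht ⟨φ, h1.sub_closed fun _ h => .mem (hst h), h2⟩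
    · exact hcs hs ⟨φ, h1, h2.sub_closed fun _ h => .mem (hst h)⟩) F hF
  exact ⟨M, hFM, hM.1, fun G hG hMG => hM.eq_of_subset hG hMG⟩

theorem IsState.maximal {T0 : Set V} {F0 : Set (Formula P V A)} (hF0 : MaximalConsistent F0)
    {l : List (Block P V A B)} (h : IsState T0 F0 l) : MaximalConsistent (cF F0 l) := by
  cases h with
  | nil h => simpa [cF] using hF0
  | snoc h1 h2 h3 h4 => simpa [cF] using h2

theorem cpl_append {α : Type} (l m : List α) : cpl l (l ++ m) = l.length := by
  induction l with
  | nil => cases m <;> simp [cpl]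
  | cons a l ih => simp [cpl, ih]

/-- for any canonical state w and any B^T_X φ ∉ F(w), there is a canonical
state u with w ∼_X u, T = 𝒯_u, and φ ∉ F(u). -/
theorem belief_child_exists {P V A B : Type}
    (T0 : Set V) (F0 : Set (Formula P V A))
    (hF0 : MaximalConsistent F0) (hB : Cardinal.mk A < Cardinal.mk B)
    (w : CState T0 F0 B) (T X : Set V) (φ : Formula P V A)
    (h : Formula.bel T X φ ∉ cF F0 w.1) :
    ∃ u : CState T0 F0 B,
      csim X w.1 u.1 ∧ T = cTrust T0 u.1 ∧ φ ∉ cF F0 u.1 := by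
  obtain ⟨b⟩ : Nonempty B := by
    rw [← Cardinal.mk_ne_zero_iff]
    exact (lt_of_le_of_lt zero_le hB).ne'
  have hmax := w.2.maximal hF0
  set F := cF F0 w.1 with hFdef
  have hnec : ∀ {χ : Formula P V A}, Thm χ → Formula.bel T X χ ∈ F := fun hχ =>
    hmax.closed (.thm (.mp (.monoB (Set.empty_subset _) (Set.empty_subset _)) (.nec hχ)))
  have hS : ∀ χ, Deduces {ψ | Formula.bel T X ψ ∈ F} χ → Formula.bel T X χ ∈ F := by
    intro χ hχ
    induction hχ with
    | thm h => exact hnec h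
    | mem h => exact h
    | mp _ _ h1 h2 => exact hmax.closed (.mp (.mp (.thm .distrib) (.mem h1)) (.mem h2))
  have hcons : Consistent (insert (Formula.neg φ) {ψ | Formula.bel T X ψ ∈ F}) := by
    rintro ⟨χ, h1, h2⟩
    have t : Thm (Formula.imp (Formula.imp (Formula.neg φ) χ)
      (Formula.imp (Formula.imp (Formula.neg φ) (Formula.neg χ)) φ)) :=
      .taut (fun v hn hi => by simp only [hi, hn]; tauto)
    exact h (hS _ (.mp (.mp (.thm t) h1.deduction) h2.deduction))
  obtain ⟨M, hsub, hM⟩ := exists_maximalConsistent hcons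
  refine ⟨⟨w.1 ++ [⟨X, b, T, M⟩], .snoc w.2 hM ?_ ?_⟩, ?_, ?_, ?_⟩
  · intro ψ hψ
    exact hsub (Or.inr (hmax.closed
      (.mp (.thm (.monoB (Set.empty_subset _) subset_rfl)) (.mem hψ))))
  · intro Y ψ
    exact hsub (Or.inr (hmax.closed (.thm .trust)))
  · intro x hx bl hbl
    simp [pathBlocks, cpl_append] at hbl
    subst hbl
    exact hx
  · simp [cTrust]
  · intro hφ
    have hφ' : φ ∈ M := by simpa [cF] using hφ
    exact hM.1 ⟨φ, .mem hφ', .mem (hsub (Set.mem_insert _ _))⟩
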